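/- For every real σ ≥ 2 there exists a constant C > 0 such that for all smooth real-valued 2π-periodic functions u, |∫₀^{2π} D^σ(u·∂ₓu)·(D^σ u) dx| ≤ C·‖u‖_{H²}·‖u‖_{H^σ}². -/

import Mathlib

/-- The `n`-th Fourier coefficient of a `2π`-periodic function:
`ĥ(n) = (1/2π) ∫₀^{2π} h(x) e^{-inx} dx`. -/
noncomputable def fourierCoef (f : ℝ → ℂ) (n : ℤ) : ℂ :=
  (1 / (2 * Real.pi)) * ∫ x in (0:ℝ)..(2 * Real.pi), f x * Complex.exp (-Complex.I * n * x)

/-- The Fourier multiplier `D^s = (1 - ∂ₓ²)^{s/2}`, multiplying the `n`-th Fourier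
coefficient by `(1 + n²)^{s/2}`. -/
noncomputable def Dop (s : ℝ) (f : ℝ → ℂ) : ℝ → ℂ :=
  fun x => ∑' n : ℤ, ((1 + (n : ℝ) ^ 2) ^ (s / 2) : ℝ) * fourierCoef f n *
    Complex.exp (Complex.I * n * x)

/-- The Sobolev norm `‖h‖_{H^s} = (Σ_{n∈ℤ} (1+n²)^s |ĥ(n)|²)^{1/2}`. -/
noncomputable def sobNorm (s : ℝ) (f : ℝ → ℂ) : ℝ :=
  Real.sqrt (∑' n : ℤ, (1 + (n : ℝ) ^ 2) ^ s * ‖fourierCoef f n‖ ^ 2)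

/-- The `L²(0,2π)` norm. -/
noncomputable def L2Norm (f : ℝ → ℂ) : ℝ :=
  Real.sqrt (∫ x in (0:ℝ)..(2 * Real.pi), ‖f x‖ ^ 2)

open MeasureTheory Set Function

lemma Function.Periodic.deriv_periodic {f : ℝ → ℂ} {c : ℝ} (hf : Function.Periodic f c) :
    Function.Periodic (deriv f) c := fun x => by
  rw [← deriv_comp_add_const, hf.funext]

lemma exp_int_mul_two_pi (n : ℤ) : Complex.exp (-Complex.I * n * (2 * Real.pi : ℝ)) = 1 := by
  rw [Complex.exp_eq_one_iff]
  exact ⟨-n, by push_cast; ring⟩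

lemma norm_exp_I_int_mul (n : ℤ) (x : ℝ) : ‖Complex.exp (Complex.I * n * x)‖ = 1 := by
  rw [show Complex.I * n * x = ((n * x : ℝ) : ℂ) * Complex.I by push_cast; ring]
  exact Complex.norm_exp_ofReal_mul_I _

lemma fourierCoef_deriv {f : ℝ → ℂ} (hf : ContDiff ℝ 1 f)
    (hp : Function.Periodic f (2 * Real.pi)) (n : ℤ) :
    fourierCoef (deriv f) n = Complex.I * n * fourierCoef f n := by
  have hd : ∀ x : ℝ, HasDerivAt f (deriv f x) x := fun x =>
    (hf.differentiable (by norm_num) x).hasDerivAt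
  have he : ∀ x : ℝ, HasDerivAt (fun x : ℝ => Complex.exp (-Complex.I * n * x))
      (Complex.exp (-Complex.I * n * x) * (-Complex.I * n)) x := fun x => by
    have h := ((Complex.ofRealCLM.hasDerivAt (x := x)).const_mul (-Complex.I * n)).cexp
    simpa using h
  have hcd : Continuous (deriv f) := hf.continuous_deriv le_rfl
  have key := intervalIntegral.integral_deriv_mul_eq_sub (a := 0) (b := 2 * Real.pi)
    (fun x _ => hd x) (fun x _ => he x) (hcd.intervalIntegrable _ _)
    (Continuous.intervalIntegrable (by fun_prop) _ _)
  have hcf := hf.continuous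
  rw [intervalIntegral.integral_add (Continuous.intervalIntegrable (by fun_prop) _ _)
    (Continuous.intervalIntegrable (by fun_prop) _ _), exp_int_mul_two_pi] at key
  have h0 : f (2 * Real.pi) = f 0 := by simpa using hp 0
  have h2 : ∫ x in (0:ℝ)..(2 * Real.pi),
      f x * (Complex.exp (-Complex.I * n * x) * (-Complex.I * n)) =
      (-Complex.I * n) * ∫ x in (0:ℝ)..(2 * Real.pi), f x * Complex.exp (-Complex.I * n * x) := by
    rw [← intervalIntegral.integral_const_mul]
    congr 1; ext x; ring
  rw [h2, h0] at key
  simp only [Complex.ofReal_zero, mul_zero, Complex.exp_zero, sub_self] at key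
  unfold fourierCoef
  linear_combination (1 / (2 * (Real.pi : ℂ))) * key

lemma fourierCoef_sub {f g : ℝ → ℂ} (hf : Continuous f) (hg : Continuous g) (n : ℤ) :
    fourierCoef (fun x => f x - g x) n = fourierCoef f n - fourierCoef g n := by
  unfold fourierCoef
  rw [← mul_sub, ← intervalIntegral.integral_sub
    (Continuous.intervalIntegrable (by fun_prop) _ _)
    (Continuous.intervalIntegrable (by fun_prop) _ _)]
  simp only [sub_mul]

lemma exists_norm_fourierCoef_le (f : ℝ → ℂ) :
    ∃ M : ℝ, ∀ n, ‖fourierCoef f n‖ ≤ M := by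
  refine ⟨1 / (2 * Real.pi) * ∫ x in (0:ℝ)..(2 * Real.pi), ‖f x‖, fun n => ?_⟩
  unfold fourierCoef
  rw [norm_mul]
  have hpi := Real.pi_pos
  have h1 : ‖(1 / (2 * (Real.pi : ℂ)))‖ = 1 / (2 * Real.pi) := by
    simp [abs_of_pos hpi]
  rw [h1]
  gcongr
  refine (intervalIntegral.norm_integral_le_integral_norm (by positivity)).trans_eq ?_
  congr 1; ext x
  have := norm_exp_I_int_mul (-n) x
  push_cast at this
  rw [norm_mul, show -Complex.I * n * x = Complex.I * -n * x by ring, this, mul_one]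

lemma exists_fourierCoef_eq_pow_mul {f : ℝ → ℂ} (hf : ContDiff ℝ (⊤ : ℕ∞) f)
    (hp : Function.Periodic f (2 * Real.pi)) (N : ℕ) :
    ∃ g : ℝ → ℂ, ContDiff ℝ (⊤ : ℕ∞) g ∧ Function.Periodic g (2 * Real.pi) ∧
      ∀ n : ℤ, fourierCoef g n = (1 + (n : ℂ) ^ 2) ^ N * fourierCoef f n := by
  induction N with
  | zero => exact ⟨f, hf, hp, by simp⟩
  | succ N ih =>
    obtain ⟨g, hg, hgp, h⟩ := ih
    have hg1 : ContDiff ℝ (⊤ : ℕ∞) (deriv g) := (contDiff_infty_iff_deriv.1 hg).2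
    have hg2 : ContDiff ℝ (⊤ : ℕ∞) (deriv (deriv g)) := (contDiff_infty_iff_deriv.1 hg1).2
    refine ⟨fun x => g x - deriv (deriv g) x, hg.sub hg2, fun x => ?_, fun n => ?_⟩
    · simp only [hgp x, hgp.deriv_periodic.deriv_periodic x]
    · have h1 : (1 : WithTop ℕ∞) ≤ ((⊤ : ℕ∞) : WithTop ℕ∞) := by exact_mod_cast le_top
      rw [fourierCoef_sub hg.continuous hg2.continuous,
        fourierCoef_deriv (hg1.of_le h1) hgp.deriv_periodic,
        fourierCoef_deriv (hg.of_le h1) hgp, h]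
      linear_combination (-(n : ℂ) ^ 2 * (1 + (n : ℂ) ^ 2) ^ N * fourierCoef f n) * Complex.I_sq

lemma summable_inv_one_add_int_sq : Summable fun n : ℤ => (1 + (n : ℝ) ^ 2)⁻¹ := by
  refine Summable.of_norm_bounded_eventually
    (Real.summable_one_div_int_pow.2 (by norm_num : 1 < 2)) ?_
  filter_upwards [(Set.finite_singleton (0 : ℤ)).compl_mem_cofinite] with n hn
  have hn' : (0 : ℝ) < (n : ℝ) ^ 2 := by
    have : (n : ℝ) ≠ 0 := by exact_mod_cast hn
    positivity
  rw [Real.norm_of_nonneg (by positivity), one_div]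
  exact inv_anti₀ hn' (by linarith)

lemma exists_rpow_mul_norm_fourierCoef_le {f : ℝ → ℂ} (hf : ContDiff ℝ (⊤ : ℕ∞) f)
    (hp : Function.Periodic f (2 * Real.pi)) (s : ℝ) :
    ∃ M : ℝ, ∀ n : ℤ, (1 + (n : ℝ) ^ 2) ^ s * ‖fourierCoef f n‖ ≤ M := by
  obtain ⟨N, hN⟩ := exists_nat_ge s
  obtain ⟨g, -, -, h⟩ := exists_fourierCoef_eq_pow_mul hf hp N
  obtain ⟨M, hM⟩ := exists_norm_fourierCoef_le g
  refine ⟨M, fun n => le_trans ?_ (hM n)⟩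
  have hn : ‖(1 + (n : ℂ) ^ 2)‖ = 1 + (n : ℝ) ^ 2 := by
    rw [show (1 + (n : ℂ) ^ 2) = ((1 + (n : ℝ) ^ 2 : ℝ) : ℂ) by push_cast; ring,
      Complex.norm_of_nonneg (by positivity)]
  rw [h, norm_mul, norm_pow, hn, ← Real.rpow_natCast (1 + (n : ℝ) ^ 2) N]
  gcongr
  linarith [sq_nonneg (n : ℝ)]

lemma summable_rpow_mul_norm_fourierCoef {f : ℝ → ℂ} (hf : ContDiff ℝ (⊤ : ℕ∞) f)
    (hp : Function.Periodic f (2 * Real.pi)) (s : ℝ) :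
    Summable fun n : ℤ => (1 + (n : ℝ) ^ 2) ^ s * ‖fourierCoef f n‖ := by
  obtain ⟨M, hM⟩ := exists_rpow_mul_norm_fourierCoef_le hf hp (s + 1)
  refine Summable.of_nonneg_of_le (fun n => by positivity) (fun n => ?_)
    (summable_inv_one_add_int_sq.mul_left M)
  have h := hM n
  rw [Real.rpow_add (by positivity), Real.rpow_one] at h
  rw [← div_eq_mul_inv, le_div_iff₀ (by positivity)]
  linarith

lemma summable_norm_fourierCoef {f : ℝ → ℂ} (hf : ContDiff ℝ (⊤ : ℕ∞) f)
    (hp : Function.Periodic f (2 * Real.pi)) : Summable fun n : ℤ => ‖fourierCoef f n‖ := by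
  simpa using summable_rpow_mul_norm_fourierCoef hf hp 0

lemma summable_rpow_mul_norm_fourierCoef_sq {f : ℝ → ℂ} (hf : ContDiff ℝ (⊤ : ℕ∞) f)
    (hp : Function.Periodic f (2 * Real.pi)) (s : ℝ) :
    Summable fun n : ℤ => (1 + (n : ℝ) ^ 2) ^ s * ‖fourierCoef f n‖ ^ 2 := by
  obtain ⟨M, hM⟩ := exists_norm_fourierCoef_le f
  refine Summable.of_nonneg_of_le (fun n => by positivity) (fun n => ?_)
    ((summable_rpow_mul_norm_fourierCoef hf hp s).mul_left M)
  have := mul_le_mul_of_nonneg_left (hM n)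
    (by positivity : 0 ≤ (1 + (n : ℝ) ^ 2) ^ s * ‖fourierCoef f n‖)
  linarith

/-- Pairing an absolutely convergent Fourier series with a continuous function. -/
lemma integral_tsum_exp_mul {c : ℤ → ℂ} (hc : Summable fun n => ‖c n‖) {g : ℝ → ℂ}
    (hg : Continuous g) :
    ∫ x in (0:ℝ)..(2 * Real.pi), (∑' n : ℤ, c n * Complex.exp (Complex.I * n * x)) * g x =
      2 * Real.pi * ∑' n : ℤ, c n * fourierCoef g (-n) := by
  have h := intervalIntegral.hasSum_integral_of_dominated_convergence (μ := volume)
    (a := 0) (b := 2 * Real.pi)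
    (F := fun (n : ℤ) (x : ℝ) => c n * Complex.exp (Complex.I * n * x) * g x)
    (f := fun x => (∑' n : ℤ, c n * Complex.exp (Complex.I * n * x)) * g x)
    (fun n x => ‖c n‖ * ‖g x‖)
    (fun n => Continuous.aestronglyMeasurable (by fun_prop))
    (fun n => Filter.Eventually.of_forall fun x _ => by
      rw [norm_mul, norm_mul, norm_exp_I_int_mul, mul_one])
    (Filter.Eventually.of_forall fun x _ => hc.mul_right _)
    (by
      simp only [tsum_mul_right]
      exact Continuous.intervalIntegrable (by fun_prop) _ _)
    (Filter.Eventually.of_forall fun x _ => by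
      refine HasSum.mul_right _ (Summable.hasSum ?_)
      refine Summable.of_norm ?_
      simpa only [norm_mul, norm_exp_I_int_mul, mul_one] using hc)
  rw [← h.tsum_eq, ← tsum_mul_left]
  congr 1; ext n
  unfold fourierCoef
  have hpi : (Real.pi : ℂ) ≠ 0 := by exact_mod_cast Real.pi_ne_zero
  have h1 : ∀ A B : ℂ, 2 * (Real.pi : ℂ) * (A * (1 / (2 * Real.pi) * B)) = A * B := by
    intro A B; field_simp
  rw [h1, ← intervalIntegral.integral_const_mul]
  congr 1; ext x
  push_cast
  rw [show -Complex.I * -(n : ℂ) * x = Complex.I * n * x by ring]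
  ring

lemma fourierCoef_exp (m n : ℤ) :
    fourierCoef (fun x => Complex.exp (Complex.I * m * x)) n = if m = n then 1 else 0 := by
  unfold fourierCoef
  have hpi : (Real.pi : ℂ) ≠ 0 := by exact_mod_cast Real.pi_ne_zero
  have h : ∀ x : ℝ, Complex.exp (Complex.I * m * x) * Complex.exp (-Complex.I * n * x) =
      Complex.exp ((-Complex.I * (n - m : ℤ)) * x) := fun x => by
    rw [← Complex.exp_add]; congr 1; push_cast; ring
  simp only [h]
  split_ifs with hmn
  · subst hmn
    simp
    field_simp
  · have h0 : (-Complex.I * ((n - m : ℤ) : ℂ)) ≠ 0 := by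
      refine mul_ne_zero (by simp) ?_
      exact_mod_cast sub_ne_zero.2 (Ne.symm hmn)
    rw [integral_exp_mul_complex h0, exp_int_mul_two_pi]
    simp

lemma fourierCoef_tsum_exp {c : ℤ → ℂ} (hc : Summable fun n => ‖c n‖) (m : ℤ) :
    fourierCoef (fun x => ∑' n : ℤ, c n * Complex.exp (Complex.I * n * x)) m = c m := by
  have hpi : (Real.pi : ℂ) ≠ 0 := by exact_mod_cast Real.pi_ne_zero
  have h := integral_tsum_exp_mul hc
    (g := fun x : ℝ => Complex.exp (-Complex.I * m * x)) (by fun_prop)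
  unfold fourierCoef
  rw [h]
  have h1 : ∀ n : ℤ, fourierCoef (fun x : ℝ => Complex.exp (-Complex.I * m * x)) (-n) =
      if n = m then 1 else 0 := fun n => by
    have h2 := fourierCoef_exp (-m) (-n)
    simp only [Int.cast_neg, neg_inj] at h2
    simp only [neg_mul, mul_neg, eq_comm (a := n)] at h2 ⊢
    exact h2
  simp only [h1, mul_ite, mul_one, mul_zero, tsum_ite_eq]
  field_simp

lemma continuous_tsum_exp {c : ℤ → ℂ} (hc : Summable fun n => ‖c n‖) :
    Continuous fun x : ℝ => ∑' n : ℤ, c n * Complex.exp (Complex.I * n * x) :=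
  continuous_tsum (fun n => by fun_prop) hc fun n x => by
    rw [norm_mul, norm_exp_I_int_mul, mul_one]

lemma tsum_fourierCoef_mul_exp {f : ℝ → ℂ} (hf : Continuous f)
    (hp : Function.Periodic f (2 * Real.pi)) (hs : Summable fun n => ‖fourierCoef f n‖) (x : ℝ) :
    ∑' n : ℤ, fourierCoef f n * Complex.exp (Complex.I * n * x) = f x := by
  have : Fact (0 < 2 * Real.pi) := ⟨Real.two_pi_pos⟩
  have hpi : (Real.pi : ℂ) ≠ 0 := by exact_mod_cast Real.pi_ne_zero
  have he : ∀ (n : ℤ) (y : ℝ), fourier n (y : AddCircle (2 * Real.pi)) =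
      Complex.exp (Complex.I * n * y) := fun n y => by
    rw [fourier_coe_apply]; congr 1; push_cast; field_simp
  let F : C(AddCircle (2 * Real.pi), ℂ) := ⟨hp.lift, continuous_coinduced_dom.2 hf⟩
  have hF : ∀ y : ℝ, F y = f y := fun y => hp.lift_coe y
  have hcoef : fourierCoeff F = fourierCoef f := by
    ext n
    rw [fourierCoeff_eq_intervalIntegral _ _ 0, fourierCoef, zero_add, Complex.real_smul]
    push_cast
    congr 2; ext y
    rw [he, hF, smul_eq_mul, mul_comm]
    push_cast
    congr 2; ring
  have h := has_pointwise_sum_fourier_series_of_summable (f := F)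
    (by rw [hcoef]; exact hs.of_norm) x
  rw [← hF, ← h.tsum_eq]
  simp only [hcoef, he, smul_eq_mul]

lemma fourierCoef_mul {f g : ℝ → ℂ} (hf : Continuous f)
    (hp : Function.Periodic f (2 * Real.pi)) (hs : Summable fun n => ‖fourierCoef f n‖)
    (hg : Continuous g) (n : ℤ) :
    fourierCoef (fun x => f x * g x) n = ∑' k : ℤ, fourierCoef f k * fourierCoef g (n - k) := by
  have hpi : (Real.pi : ℂ) ≠ 0 := by exact_mod_cast Real.pi_ne_zero
  have h := integral_tsum_exp_mul hs
    (g := fun x : ℝ => g x * Complex.exp (-Complex.I * n * x)) (by fun_prop)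
  simp only [tsum_fourierCoef_mul_exp hf hp hs] at h
  rw [fourierCoef]
  simp only [mul_assoc] at h ⊢
  rw [h]
  have h1 : ∀ k : ℤ, fourierCoef (fun x : ℝ => g x * Complex.exp (-Complex.I * (n * x))) (-k) =
      fourierCoef g (n - k) := fun k => by
    unfold fourierCoef
    congr 2; ext x
    rw [mul_assoc, ← Complex.exp_add]
    congr 2; push_cast; ring
  simp only [h1]
  field_simp

/-- The pairing of `D^s f` and `D^s g` in terms of Fourier coefficients. -/
lemma integral_Dop_mul_Dop {f g : ℝ → ℂ} (hf : ContDiff ℝ (⊤ : ℕ∞) f)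
    (hfp : Function.Periodic f (2 * Real.pi)) (hg : ContDiff ℝ (⊤ : ℕ∞) g)
    (hgp : Function.Periodic g (2 * Real.pi)) (s : ℝ) :
    ∫ x in (0:ℝ)..(2 * Real.pi), Dop s f x * Dop s g x =
      2 * Real.pi * ∑' n : ℤ, ((1 + (n : ℝ) ^ 2) ^ s : ℝ) * fourierCoef f n *
        fourierCoef g (-n) := by
  have hsum : ∀ {h : ℝ → ℂ}, ContDiff ℝ (⊤ : ℕ∞) h → Function.Periodic h (2 * Real.pi) →
      Summable fun n : ℤ => ‖(((1 + (n : ℝ) ^ 2) ^ (s / 2) : ℝ) : ℂ) * fourierCoef h n‖ := by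
    intro h hh hhp
    refine (summable_rpow_mul_norm_fourierCoef hh hhp (s / 2)).congr fun n => ?_
    rw [norm_mul, Complex.norm_of_nonneg (by positivity)]
  unfold Dop
  rw [integral_tsum_exp_mul (hsum hf hfp) (continuous_tsum_exp (hsum hg hgp))]
  congr 1; congr 1; ext n
  rw [fourierCoef_tsum_exp (hsum hg hgp)]
  have : (1 + (n : ℝ) ^ 2) ^ s = (1 + (n : ℝ) ^ 2) ^ (s / 2) * (1 + (n : ℝ) ^ 2) ^ (s / 2) := by
    rw [← Real.rpow_add (by positivity)]; ring_nf
  rw [this]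
  push_cast
  rw [neg_sq]
  ring

lemma hasDerivAt_mul_one_add_sq_rpow (σ x : ℝ) :
    HasDerivAt (fun x : ℝ => x * (1 + x ^ 2) ^ σ)
      ((1 + x ^ 2) ^ σ + x * (2 * x * σ * (1 + x ^ 2) ^ (σ - 1))) x := by
  have h1 : HasDerivAt (fun x : ℝ => 1 + x ^ 2) (2 * x) x := by
    simpa using (hasDerivAt_pow 2 x).const_add 1
  have h2 := h1.rpow_const (p := σ) (Or.inl (by positivity))
  exact (by simpa using (hasDerivAt_id x).mul h2 :
    HasDerivAt (id * fun y : ℝ => (1 + y ^ 2) ^ σ) _ x)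

lemma abs_deriv_mul_one_add_sq_rpow_le {σ : ℝ} (hσ : 0 ≤ σ) (x : ℝ) :
    |(1 + x ^ 2) ^ σ + x * (2 * x * σ * (1 + x ^ 2) ^ (σ - 1))| ≤
      (1 + 2 * σ) * (1 + x ^ 2) ^ σ := by
  have hp : 0 < 1 + x ^ 2 := by positivity
  have h : (1 + x ^ 2) ^ σ = (1 + x ^ 2) ^ (σ - 1) * (1 + x ^ 2) := by
    rw [← Real.rpow_add_one hp.ne']; ring_nf
  have h0 : 0 < (1 + x ^ 2) ^ (σ - 1) := by positivity
  rw [show x * (2 * x * σ * (1 + x ^ 2) ^ (σ - 1)) = 2 * σ * x ^ 2 * (1 + x ^ 2) ^ (σ - 1) by ring,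
    abs_of_nonneg (by positivity), h]
  have : 0 ≤ σ * (1 + x ^ 2) ^ (σ - 1) := by positivity
  nlinarith

/-- The resonance bound when the first frequency is the smallest one. -/
lemma abs_resonance_le_of_abs_le {σ : ℝ} (hσ : 0 ≤ σ) {k l m : ℝ} (h : k + l + m = 0)
    (hkl : |k| ≤ |l|) (hkm : |k| ≤ |m|) :
    |k * (1 + k ^ 2) ^ σ + l * (1 + l ^ 2) ^ σ + m * (1 + m ^ 2) ^ σ| ≤
      (1 + (1 + 2 * σ) * 2 ^ σ) *
        ((1 + k ^ 2) ^ (1 / 2 : ℝ) * (1 + l ^ 2) ^ (σ / 2) * (1 + m ^ 2) ^ (σ / 2)) := by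
  set L := (1 + l ^ 2) ^ (σ / 2) with hL
  set M := (1 + m ^ 2) ^ (σ / 2) with hM
  have hLpos : 0 < L := by positivity
  have hMpos : 0 < M := by positivity
  have hk2l : k ^ 2 ≤ l ^ 2 := sq_le_sq.2 hkl
  have hk2m : k ^ 2 ≤ m ^ 2 := sq_le_sq.2 hkm
  have habs : |k| ≤ (1 + k ^ 2) ^ (1 / 2 : ℝ) := by
    rw [← Real.sqrt_eq_rpow]
    exact Real.abs_le_sqrt (by linarith)
  have hml : |m| ≤ 2 * |l| := by
    rw [show m = -(k + l) by linarith, abs_neg]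
    linarith [abs_add_le k l]
  have hlm : |l| ≤ 2 * |m| := by
    rw [show l = -(k + m) by linarith, abs_neg]
    linarith [abs_add_le k m]
  -- on the segment the weight is controlled by the geometric mean of the end-point weights
  have hw : ∀ y : ℝ, |y| ≤ max |l| |m| → (1 + y ^ 2) ^ σ ≤ 2 ^ σ * (L * M) := by
    intro y hy
    have hlm' : (1 + y ^ 2) ^ 2 ≤ 4 * ((1 + l ^ 2) * (1 + m ^ 2)) := by
      have h1 : m ^ 2 ≤ 4 * l ^ 2 := by
        have := sq_le_sq.2 (show |m| ≤ |2 * l| by rw [abs_mul]; simpa using hml)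
        linarith
      have h2 : l ^ 2 ≤ 4 * m ^ 2 := by
        have := sq_le_sq.2 (show |l| ≤ |2 * m| by rw [abs_mul]; simpa using hlm)
        linarith
      rcases le_max_iff.1 hy with hy | hy
      · have hy2 := sq_le_sq.2 hy
        nlinarith [mul_le_mul (add_le_add_right hy2 1) (add_le_add_right hy2 1)
          (by positivity) (by positivity), sq_nonneg l, sq_nonneg m]
      · have hy2 := sq_le_sq.2 hy
        nlinarith [mul_le_mul (add_le_add_right hy2 1) (add_le_add_right hy2 1)
          (by positivity) (by positivity), sq_nonneg l, sq_nonneg m]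
    have h3 := Real.rpow_le_rpow (by positivity) hlm' (by positivity : 0 ≤ σ / 2)
    rw [Real.mul_rpow (by positivity) (by positivity),
      Real.mul_rpow (by positivity) (by positivity),
      show (4 : ℝ) = 2 ^ (2 : ℕ) by norm_num, ← Real.rpow_natCast_mul (by positivity),
      ← Real.rpow_natCast_mul (by positivity), Nat.cast_ofNat,
      mul_div_cancel₀ σ two_ne_zero] at h3
    exact h3
  have hkk : |k * (1 + k ^ 2) ^ σ| ≤ (1 + k ^ 2) ^ (1 / 2 : ℝ) * (L * M) := by
    rw [abs_mul, abs_of_nonneg (by positivity : 0 ≤ (1 + k ^ 2) ^ σ)]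
    refine mul_le_mul habs ?_ (by positivity) (by positivity)
    rw [← add_halves σ, Real.rpow_add (by positivity)]
    exact mul_le_mul (Real.rpow_le_rpow (by positivity) (by linarith) (by positivity))
      (Real.rpow_le_rpow (by positivity) (by linarith) (by positivity)) (by positivity)
      (by positivity)
  have hlm2 : |l * (1 + l ^ 2) ^ σ + m * (1 + m ^ 2) ^ σ| ≤
      (1 + 2 * σ) * (2 ^ σ * (L * M)) * |k| := by
    have hb : ∀ y ∈ Icc (-max |l| |m|) (max |l| |m|),
        ‖(1 + y ^ 2) ^ σ + y * (2 * y * σ * (1 + y ^ 2) ^ (σ - 1))‖ ≤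
          (1 + 2 * σ) * (2 ^ σ * (L * M)) := fun y hy => by
      rw [Real.norm_eq_abs]
      refine (abs_deriv_mul_one_add_sq_rpow_le hσ y).trans ?_
      exact mul_le_mul_of_nonneg_left (hw y (abs_le.2 hy)) (by positivity)
    have := Convex.norm_image_sub_le_of_norm_hasDerivWithin_le (𝕜 := ℝ)
      (f := fun x : ℝ => x * (1 + x ^ 2) ^ σ) (x := -m) (y := l)
      (fun y _ => (hasDerivAt_mul_one_add_sq_rpow σ y).hasDerivWithinAt) hb (convex_Icc _ _)
      (abs_le.1 (by rw [abs_neg]; exact le_max_right _ _)) (abs_le.1 (le_max_left _ _))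
    simp only [Real.norm_eq_abs, neg_sq] at this
    rwa [show l - -m = -k by linarith, abs_neg, neg_mul, sub_neg_eq_add] at this
  calc _ ≤ |k * (1 + k ^ 2) ^ σ| + |l * (1 + l ^ 2) ^ σ + m * (1 + m ^ 2) ^ σ| := by
        rw [add_assoc]; exact abs_add_le _ _
    _ ≤ (1 + k ^ 2) ^ (1 / 2 : ℝ) * (L * M) +
        (1 + 2 * σ) * (2 ^ σ * (L * M)) * (1 + k ^ 2) ^ (1 / 2 : ℝ) := by
        refine add_le_add hkk (hlm2.trans ?_)
        gcongr
    _ = _ := by ring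

/-- The symmetrised symbol `F(k) + F(l) + F(m)`, `F(x) = x (1 + x²)^σ`, on `k + l + m = 0`. -/
lemma abs_resonance_le {σ : ℝ} (hσ : 0 ≤ σ) {k l m : ℝ} (h : k + l + m = 0) :
    |k * (1 + k ^ 2) ^ σ + l * (1 + l ^ 2) ^ σ + m * (1 + m ^ 2) ^ σ| ≤
      (1 + (1 + 2 * σ) * 2 ^ σ) *
        ((1 + k ^ 2) ^ (1 / 2 : ℝ) * (1 + l ^ 2) ^ (σ / 2) * (1 + m ^ 2) ^ (σ / 2) +
         (1 + l ^ 2) ^ (1 / 2 : ℝ) * (1 + m ^ 2) ^ (σ / 2) * (1 + k ^ 2) ^ (σ / 2) +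
         (1 + m ^ 2) ^ (1 / 2 : ℝ) * (1 + k ^ 2) ^ (σ / 2) * (1 + l ^ 2) ^ (σ / 2)) := by
  have hk : 0 ≤ (1 + k ^ 2) ^ (1 / 2 : ℝ) * (1 + l ^ 2) ^ (σ / 2) * (1 + m ^ 2) ^ (σ / 2) := by
    positivity
  have hl : 0 ≤ (1 + l ^ 2) ^ (1 / 2 : ℝ) * (1 + m ^ 2) ^ (σ / 2) * (1 + k ^ 2) ^ (σ / 2) := by
    positivity
  have hm : 0 ≤ (1 + m ^ 2) ^ (1 / 2 : ℝ) * (1 + k ^ 2) ^ (σ / 2) * (1 + l ^ 2) ^ (σ / 2) := by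
    positivity
  have hC : 0 ≤ 1 + (1 + 2 * σ) * 2 ^ σ := by positivity
  by_cases hmin : |k| ≤ |l| ∧ |k| ≤ |m|
  · refine (abs_resonance_le_of_abs_le hσ h hmin.1 hmin.2).trans ?_
    exact mul_le_mul_of_nonneg_left (by linarith) hC
  by_cases hlm : |l| ≤ |m|
  · have hlk : |l| ≤ |k| := by
      by_contra! hc
      exact hmin ⟨hc.le, hc.le.trans hlm⟩
    have := abs_resonance_le_of_abs_le hσ (show l + m + k = 0 by linarith) hlm hlk
    rw [show l * (1 + l ^ 2) ^ σ + m * (1 + m ^ 2) ^ σ + k * (1 + k ^ 2) ^ σ =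
      k * (1 + k ^ 2) ^ σ + l * (1 + l ^ 2) ^ σ + m * (1 + m ^ 2) ^ σ by ring] at this
    exact this.trans (mul_le_mul_of_nonneg_left (by linarith) hC)
  · push Not at hlm
    have hmk : |m| ≤ |k| := by
      by_contra! hc
      exact hmin ⟨hc.le.trans hlm.le, hc.le⟩
    have := abs_resonance_le_of_abs_le hσ (show m + k + l = 0 by linarith) hmk hlm.le
    rw [show m * (1 + m ^ 2) ^ σ + k * (1 + k ^ 2) ^ σ + l * (1 + l ^ 2) ^ σ =
      k * (1 + k ^ 2) ^ σ + l * (1 + l ^ 2) ^ σ + m * (1 + m ^ 2) ^ σ by ring] at this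
    exact this.trans (mul_le_mul_of_nonneg_left (by linarith) hC)

/-- The rotation `(k, l, m) ↦ (l, m, k)` of the frequencies with `k + l + m = 0`. -/
def rotateFreq : ℤ × ℤ ≃ ℤ × ℤ where
  toFun p := (p.2, -p.1 - p.2)
  invFun p := (-p.1 - p.2, p.1)
  left_inv p := by ext <;> simp; ring
  right_inv p := by ext <;> simp

/-- The reflection `(k, l, m) ↦ (k, m, l)` of the frequencies with `k + l + m = 0`. -/
def reflectFreq : ℤ × ℤ ≃ ℤ × ℤ where
  toFun p := (p.1, -p.1 - p.2)
  invFun p := (p.1, -p.1 - p.2)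
  left_inv p := by ext <;> simp
  right_inv p := by ext <;> simp

/-- The change of variables `(n, k) ↦ (k, n - k)`. -/
def splitFreq : ℤ × ℤ ≃ ℤ × ℤ where
  toFun p := (p.2, p.1 - p.2)
  invFun p := (p.1 + p.2, p.1)
  left_inv p := by ext <;> simp
  right_inv p := by ext <;> simp

lemma exists_hasSum_trilinear_le {P Q : ℤ → ℝ} (hP0 : ∀ n, 0 ≤ P n) (hQ0 : ∀ n, 0 ≤ Q n)
    (hP : Summable P) (hQ : Summable fun n => Q n ^ 2) :
    ∃ T, HasSum (fun p : ℤ × ℤ => P p.1 * Q p.2 * Q (-p.1 - p.2)) T ∧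
      T ≤ (∑' n, P n) * ∑' n, Q n ^ 2 := by
  have h1 : HasSum (fun p : ℤ × ℤ => P p.1 * Q p.2 ^ 2) ((∑' n, P n) * ∑' n, Q n ^ 2) :=
    HasSum.mul (f := P) (g := fun n => Q n ^ 2) hP.hasSum hQ.hasSum
      (Summable.mul_of_nonneg hP hQ hP0 fun n => sq_nonneg (Q n))
  have h2 : HasSum (fun p : ℤ × ℤ => P p.1 * Q (-p.1 - p.2) ^ 2)
      ((∑' n, P n) * ∑' n, Q n ^ 2) :=
    (Equiv.hasSum_iff (f := fun p : ℤ × ℤ => P p.1 * Q p.2 ^ 2) reflectFreq).2 h1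
  have h3 : HasSum (fun p : ℤ × ℤ => (P p.1 * Q p.2 ^ 2 + P p.1 * Q (-p.1 - p.2) ^ 2) / 2)
      ((∑' n, P n) * ∑' n, Q n ^ 2) := by
    simpa only [add_self_div_two] using (h1.add h2).div_const 2
  have hle : ∀ p : ℤ × ℤ, P p.1 * Q p.2 * Q (-p.1 - p.2) ≤
      (P p.1 * Q p.2 ^ 2 + P p.1 * Q (-p.1 - p.2) ^ 2) / 2 := fun p => by
    nlinarith [mul_nonneg (hP0 p.1) (sq_nonneg (Q p.2 - Q (-p.1 - p.2)))]
  have hs : Summable fun p : ℤ × ℤ => P p.1 * Q p.2 * Q (-p.1 - p.2) :=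
    Summable.of_nonneg_of_le
      (fun p => mul_nonneg (mul_nonneg (hP0 _) (hQ0 _)) (hQ0 _)) hle h3.summable
  exact ⟨∑' p : ℤ × ℤ, P p.1 * Q p.2 * Q (-p.1 - p.2), hs.hasSum, hasSum_le hle hs.hasSum h3⟩

/-- The trilinear form of the energy estimate, as a sum over the frequencies `(k, l)`. -/
noncomputable def energyTerm (σ : ℝ) (a : ℤ → ℂ) (p : ℤ × ℤ) : ℂ :=
  (((-p.1 - p.2 : ℤ) * (1 + ((-p.1 - p.2 : ℤ) : ℝ) ^ 2) ^ σ : ℝ) : ℂ) *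
    (a p.1 * a p.2 * a (-p.1 - p.2))

lemma summable_energyTerm {σ : ℝ} {a : ℤ → ℂ} (ha : Summable fun n => ‖a n‖) {M : ℝ}
    (hM : ∀ n : ℤ, (1 + (n : ℝ) ^ 2) ^ (σ + 1) * ‖a n‖ ≤ M) : Summable (energyTerm σ a) := by
  refine Summable.of_norm_bounded
    ((ha.mul_of_nonneg ha (fun _ => norm_nonneg _) fun _ => norm_nonneg _).mul_left M)
    fun p => ?_
  have h := hM (-p.1 - p.2)
  unfold energyTerm
  generalize -p.1 - p.2 = m at h ⊢
  rw [norm_mul, norm_mul, norm_mul, Complex.norm_real, Real.norm_eq_abs, abs_mul,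
    abs_of_nonneg (by positivity : 0 ≤ (1 + (m : ℝ) ^ 2) ^ σ)]
  rw [Real.rpow_add_one (by positivity)] at h
  have hm : |(m : ℝ)| ≤ 1 + (m : ℝ) ^ 2 := by
    rw [← sq_abs]; nlinarith [sq_nonneg (|(m : ℝ)| - 1)]
  calc _ = (1 + (m : ℝ) ^ 2) ^ σ * |(m : ℝ)| * ‖a m‖ * (‖a p.1‖ * ‖a p.2‖) := by ring
    _ ≤ (1 + (m : ℝ) ^ 2) ^ σ * (1 + (m : ℝ) ^ 2) * ‖a m‖ * (‖a p.1‖ * ‖a p.2‖) := by gcongr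
    _ ≤ M * (‖a p.1‖ * ‖a p.2‖) := by gcongr

lemma norm_tsum_energyTerm_le {σ : ℝ} (hσ : 0 ≤ σ) {a : ℤ → ℂ} (hH : Summable (energyTerm σ a))
    (hP : Summable fun n : ℤ => (1 + (n : ℝ) ^ 2) ^ (1 / 2 : ℝ) * ‖a n‖)
    (hQ : Summable fun n : ℤ => (1 + (n : ℝ) ^ 2) ^ σ * ‖a n‖ ^ 2) :
    ‖∑' p, energyTerm σ a p‖ ≤ (1 + (1 + 2 * σ) * 2 ^ σ) *
      ((∑' n : ℤ, (1 + (n : ℝ) ^ 2) ^ (1 / 2 : ℝ) * ‖a n‖) *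
        ∑' n : ℤ, (1 + (n : ℝ) ^ 2) ^ σ * ‖a n‖ ^ 2) := by
  have hsq : ∀ n : ℤ, (1 + (n : ℝ) ^ 2) ^ σ * ‖a n‖ ^ 2 =
      ((1 + (n : ℝ) ^ 2) ^ (σ / 2) * ‖a n‖) ^ 2 := fun n => by
    rw [mul_pow, ← Real.rpow_mul_natCast (by positivity), Nat.cast_ofNat,
      div_mul_cancel₀ σ two_ne_zero]
  simp only [hsq] at hQ ⊢
  obtain ⟨T, hT, hTle⟩ := exists_hasSum_trilinear_le
    (fun n => by positivity) (fun n => by positivity) hP hQ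
  have hH1 := hH.hasSum
  have hH2 := (Equiv.hasSum_iff rotateFreq).2 hH1
  have hH3 := (Equiv.hasSum_iff rotateFreq).2 hH2
  have hT2 := (Equiv.hasSum_iff rotateFreq).2 hT
  have hT3 := (Equiv.hasSum_iff rotateFreq).2 hT2
  have key := HasSum.norm_le_of_bounded ((hH1.add hH2).add hH3)
    (((hT.add hT2).add hT3).mul_left (1 + (1 + 2 * σ) * 2 ^ σ)) fun p => ?_
  · have h3 : ∀ z : ℂ, ‖z + z + z‖ = 3 * ‖z‖ := fun z => by
      rw [show z + z + z = 3 * z by ring, norm_mul]; simp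
    rw [h3] at key
    have := mul_le_mul_of_nonneg_left hTle (by positivity : 0 ≤ 1 + (1 + 2 * σ) * 2 ^ σ)
    linarith
  · obtain ⟨k, l⟩ := p
    have e1 : -l - (-k - l) = k := by ring
    have e2 : -(-k - l) - k = l := by ring
    simp only [comp_apply, rotateFreq, Equiv.coe_fn_mk, energyTerm, e1, e2]
    have hklm : (k : ℝ) + l + ((-k - l : ℤ) : ℝ) = 0 := by push_cast; ring
    generalize -k - l = m at hklm ⊢
    have hres := abs_resonance_le hσ hklm
    have hG : 0 ≤ ‖a k‖ * ‖a l‖ * ‖a m‖ := by positivity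
    have := mul_le_mul_of_nonneg_right hres hG
    refine le_trans (le_of_eq ?_) (this.trans_eq (by ring))
    rw [← norm_mul, ← norm_mul, ← Real.norm_eq_abs, ← Complex.norm_real, ← norm_mul]
    congr 1
    push_cast
    ring

lemma tsum_rpow_half_mul_norm_le (a : ℤ → ℂ)
    (h : Summable fun n : ℤ => (1 + (n : ℝ) ^ 2) ^ (2 : ℝ) * ‖a n‖ ^ 2) :
    ∑' n : ℤ, (1 + (n : ℝ) ^ 2) ^ (1 / 2 : ℝ) * ‖a n‖ ≤
      √(∑' n : ℤ, (1 + (n : ℝ) ^ 2)⁻¹) *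
        √(∑' n : ℤ, (1 + (n : ℝ) ^ 2) ^ (2 : ℝ) * ‖a n‖ ^ 2) := by
  have e1 : ∀ n : ℤ, ((1 + (n : ℝ) ^ 2) ^ (-(1 / 2) : ℝ)) ^ (2 : ℝ) = (1 + (n : ℝ) ^ 2)⁻¹ :=
    fun n => by
      rw [← Real.rpow_mul (by positivity), ← Real.rpow_neg_one]; norm_num
  have e2 : ∀ n : ℤ, ((1 + (n : ℝ) ^ 2) * ‖a n‖) ^ (2 : ℝ) =
      (1 + (n : ℝ) ^ 2) ^ (2 : ℝ) * ‖a n‖ ^ 2 := fun n => by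
    rw [Real.mul_rpow (by positivity) (by positivity), Real.rpow_two ‖a n‖]
  have hcs := Real.inner_le_Lp_mul_Lq_tsum_of_nonneg Real.HolderConjugate.two_two
    (f := fun n : ℤ => (1 + (n : ℝ) ^ 2) ^ (-(1 / 2) : ℝ))
    (g := fun n : ℤ => (1 + (n : ℝ) ^ 2) * ‖a n‖)
    (fun n => by positivity) (fun n => by positivity)
    (by simpa only [e1] using summable_inv_one_add_int_sq) (by simpa only [e2] using h)
  simp only [e1, e2, ← Real.sqrt_eq_rpow] at hcs
  refine le_trans (le_of_eq ?_) hcs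
  congr 1; ext n
  rw [← mul_assoc, ← Real.rpow_add_one (by positivity)]
  norm_num [Real.sqrt_eq_rpow]

/-- The energy pairing of `f ∂ₓf` with `f` as a trilinear sum over frequencies. -/
lemma integral_Dop_mul_deriv_mul_Dop {f : ℝ → ℂ} (hf : ContDiff ℝ (⊤ : ℕ∞) f)
    (hp : Function.Periodic f (2 * Real.pi)) (σ : ℝ)
    (hH : Summable (energyTerm σ (fourierCoef f))) :
    ∫ x in (0:ℝ)..(2 * Real.pi), Dop σ (fun y => f y * deriv f y) x * Dop σ f x =
      -(Real.pi * Complex.I) * ∑' p, energyTerm σ (fourierCoef f) p := by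
  have h1 : (1 : WithTop ℕ∞) ≤ ((⊤ : ℕ∞) : WithTop ℕ∞) := by exact_mod_cast le_top
  have hf' : ContDiff ℝ (⊤ : ℕ∞) (deriv f) := (contDiff_infty_iff_deriv.1 hf).2
  have hs := summable_norm_fourierCoef hf hp
  have hsq : deriv (fun y => f y * f y) = fun y => 2 * (f y * deriv f y) := by
    ext y
    have hd := (hf.differentiable (by simp) y).hasDerivAt
    rw [(hd.fun_mul hd).deriv]; ring
  have hv : ∀ n : ℤ, fourierCoef (fun y => f y * deriv f y) n =
      Complex.I * n / 2 * ∑' k : ℤ, fourierCoef f k * fourierCoef f (n - k) := fun n => by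
    have h2 := fourierCoef_deriv ((hf.mul hf).of_le h1)
      (fun x => by simp only [hp x]) n (f := fun y => f y * f y)
    rw [hsq, fourierCoef_mul hf.continuous hp hs hf.continuous] at h2
    have h3 : fourierCoef (fun y => 2 * (f y * deriv f y)) n =
        2 * fourierCoef (fun y => f y * deriv f y) n := by
      unfold fourierCoef
      simp only [mul_assoc (2 : ℂ), intervalIntegral.integral_const_mul]
      ring
    linear_combination (1 / 2) * h2 - (1 / 2) * h3
  rw [integral_Dop_mul_Dop (hf.mul hf')
    (fun x => by simp only [hp x, hp.deriv_periodic x]) hf hp σ,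
    ← Equiv.tsum_eq splitFreq,
    Summable.tsum_prod (f := fun p => energyTerm σ (fourierCoef f) (splitFreq p))
      ((Equiv.summable_iff splitFreq).2 hH),
    ← tsum_mul_left, ← tsum_mul_left]
  congr 1; ext n
  have e : ∀ k : ℤ, -k - (n - k) = -n := fun k => by ring
  simp only [hv, splitFreq, Equiv.coe_fn_mk, energyTerm, e, tsum_mul_left, tsum_mul_right]
  push_cast
  rw [neg_sq]
  ring

/-- trilinear energy estimate: for every real `σ ≥ 2` there is `C > 0`
such that for all smooth real-valued `2π`-periodic `u`:
`|∫₀^{2π} D^σ(u·∂ₓu)·(D^σ u) dx| ≤ C·‖u‖_{H²}·‖u‖_{H^σ}²`. -/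
theorem stmt_9 (σ : ℝ) (hσ : 2 ≤ σ) :
    ∃ C : ℝ, 0 < C ∧ ∀ u : ℝ → ℝ,
      ContDiff ℝ (⊤ : ℕ∞) u → (∀ x, u (x + 2 * Real.pi) = u x) →
      ‖∫ x in (0:ℝ)..(2 * Real.pi),
          Dop σ (fun y => ((u y * deriv u y : ℝ) : ℂ)) x *
            Dop σ (fun y => ((u y : ℝ) : ℂ)) x‖
        ≤ C * sobNorm 2 (fun y => ((u y : ℝ) : ℂ)) *
            sobNorm σ (fun y => ((u y : ℝ) : ℂ)) ^ 2 := by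
  have hσ0 : 0 ≤ σ := by linarith
  have hpi := Real.pi_pos
  refine ⟨Real.pi * (1 + (1 + 2 * σ) * 2 ^ σ) * (√(∑' n : ℤ, (1 + (n : ℝ) ^ 2)⁻¹)), ?_,
    fun u hu hper => ?_⟩
  · have hsum : 0 < ∑' n : ℤ, (1 + (n : ℝ) ^ 2)⁻¹ :=
      summable_inv_one_add_int_sq.tsum_pos (fun n => by positivity) 0 (by simp)
    positivity
  set f : ℝ → ℂ := fun y => (u y : ℂ) with hf_def
  have hf : ContDiff ℝ (⊤ : ℕ∞) f := Complex.ofRealCLM.contDiff.comp hu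
  have hp : Function.Periodic f (2 * Real.pi) := fun x => by simp only [hf_def, hper x]
  have hprod : (fun y => ((u y * deriv u y : ℝ) : ℂ)) = fun y => f y * deriv f y := by
    ext y
    rw [((hu.differentiable (by simp) y).hasDerivAt.ofReal_comp : HasDerivAt f _ y).deriv,
      Complex.ofReal_mul]
  obtain ⟨M, hM⟩ := exists_rpow_mul_norm_fourierCoef_le hf hp (σ + 1)
  have hH := summable_energyTerm (summable_norm_fourierCoef hf hp) hM
  have hQ := summable_rpow_mul_norm_fourierCoef_sq hf hp σ
  have hbound := norm_tsum_energyTerm_le hσ0 hH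
    (summable_rpow_mul_norm_fourierCoef hf hp (1 / 2)) hQ
  have hH2 := tsum_rpow_half_mul_norm_le _ (summable_rpow_mul_norm_fourierCoef_sq hf hp 2)
  have hQ0 : 0 ≤ ∑' n : ℤ, (1 + (n : ℝ) ^ 2) ^ σ * ‖fourierCoef f n‖ ^ 2 :=
    tsum_nonneg fun n => by positivity
  rw [hprod, integral_Dop_mul_deriv_mul_Dop hf hp σ hH, norm_mul, norm_neg, norm_mul,
    Complex.norm_I, mul_one, Complex.norm_of_nonneg hpi.le, sobNorm, sobNorm, Real.sq_sqrt hQ0]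
  calc _ ≤ Real.pi * ((1 + (1 + 2 * σ) * 2 ^ σ) *
        ((√(∑' n : ℤ, (1 + (n : ℝ) ^ 2)⁻¹) *
          √(∑' n : ℤ, (1 + (n : ℝ) ^ 2) ^ (2 : ℝ) * ‖fourierCoef f n‖ ^ 2)) *
          ∑' n : ℤ, (1 + (n : ℝ) ^ 2) ^ σ * ‖fourierCoef f n‖ ^ 2)) := by
        refine mul_le_mul_of_nonneg_left (hbound.trans ?_) hpi.le
        gcongr
    _ = _ := by ring
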